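/- For every ordinal ζ and every worm A all of whose modality indices are strictly less than ζ, the implication ⟨ζ⟩⊤ → A is derivable in GLP. -/

import Mathlib

/-- Formulas of polymodal provability logic GLP: propositional variables, ⊤,
Boolean connectives, and a modality `[ξ]` for each ordinal `ξ`. -/
inductive GLPFormula : Type 1 where
  | var : ℕ → GLPFormula
  | top : GLPFormula
  | neg : GLPFormula → GLPFormula
  | and : GLPFormula → GLPFormula → GLPFormula
  | imp : GLPFormula → GLPFormula → GLPFormula
  | box : Ordinal → GLPFormula → GLPFormula

namespace GLPFormula

/-- `⟨ξ⟩φ` abbreviates `¬[ξ]¬φ`. -/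
def dia (ξ : Ordinal) (φ : GLPFormula) : GLPFormula := neg (box ξ (neg φ))

/-- Biconditional, defined from the other connectives. -/
def biimp (φ ψ : GLPFormula) : GLPFormula := and (imp φ ψ) (imp ψ φ)

/-- The set of ordinals occurring as modality indices in a formula. -/
def mods : GLPFormula → Set Ordinal
  | var _ => ∅
  | top => ∅
  | neg φ => mods φ
  | and φ ψ => mods φ ∪ mods ψ
  | imp φ ψ => mods φ ∪ mods ψ
  | box ξ φ => insert ξ (mods φ)

end GLPFormula

/-- A propositional tautology: true under every Boolean valuation that respects
the Boolean connectives (variables and boxed formulas are treated as atoms). -/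
def IsTautology (φ : GLPFormula) : Prop :=
  ∀ v : GLPFormula → Bool,
    v GLPFormula.top = true →
    (∀ ψ, v ψ.neg = !v ψ) →
    (∀ ψ χ, v (ψ.and χ) = (v ψ && v χ)) →
    (∀ ψ χ, v (ψ.imp χ) = (!v ψ || v χ)) →
    v φ = true

/-- Derivability in GLP, with modality indices restricted to the set `S`
(`S = Set.univ` gives full GLP; `S = Set.Iio ω` gives GLP_ω). -/
inductive GLPProof (S : Set Ordinal) : GLPFormula → Prop where
  | taut {φ} : φ.mods ⊆ S → IsTautology φ → GLPProof S φ
  | distr {ξ φ ψ} : ξ ∈ S → φ.mods ⊆ S → ψ.mods ⊆ S →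
      GLPProof S ((GLPFormula.box ξ (φ.imp ψ)).imp
        ((GLPFormula.box ξ φ).imp (GLPFormula.box ξ ψ)))
  | trans {ξ φ} : ξ ∈ S → φ.mods ⊆ S →
      GLPProof S ((GLPFormula.box ξ φ).imp (GLPFormula.box ξ (GLPFormula.box ξ φ)))
  | lob {ξ φ} : ξ ∈ S → φ.mods ⊆ S →
      GLPProof S ((GLPFormula.box ξ ((GLPFormula.box ξ φ).imp φ)).imp (GLPFormula.box ξ φ))
  | negIntro {ξ ζ φ} : ξ < ζ → ξ ∈ S → ζ ∈ S → φ.mods ⊆ S →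
      GLPProof S ((GLPFormula.dia ζ φ).imp (GLPFormula.dia ξ φ))
  | mono {ξ ζ φ} : ξ < ζ → ξ ∈ S → ζ ∈ S → φ.mods ⊆ S →
      GLPProof S ((GLPFormula.dia ξ φ).imp (GLPFormula.box ζ (GLPFormula.dia ξ φ)))
  | mp {φ ψ} : GLPProof S (φ.imp ψ) → GLPProof S φ → GLPProof S ψ
  | nec {ξ φ} : ξ ∈ S → GLPProof S φ → GLPProof S (GLPFormula.box ξ φ)

/-- Derivability in full GLP (modalities indexed by all ordinals). -/
def GLPProves (φ : GLPFormula) : Prop := GLPProof Set.univ φ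

/-- Derivability in GLP_ω (modalities indexed by natural numbers). -/
def GLPomegaProves (φ : GLPFormula) : Prop := GLPProof (Set.Iio Ordinal.omega0) φ

/-- A GLP_ω formula: all modality indices are below ω. -/
def IsOmegaFormula (φ : GLPFormula) : Prop := φ.mods ⊆ Set.Iio Ordinal.omega0

/-- Conjunction of a finite list of formulas. -/
def listConj : List GLPFormula → GLPFormula
  | [] => GLPFormula.top
  | φ :: l => φ.and (listConj l)

/-- `SetProves S τ χ`: the set `τ` proves `χ`, i.e. `ψ₁ ∧ … ∧ ψₘ → χ` is
derivable for some finite list of members of `τ`. -/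
def SetProves (S : Set Ordinal) (τ : Set GLPFormula) (χ : GLPFormula) : Prop :=
  ∃ l : List GLPFormula, (∀ ψ ∈ l, ψ ∈ τ) ∧ GLPProof S ((listConj l).imp χ)

/-- The iterated consistency formulas: `Q n 0 φ = ⊤`, `Q n (k+1) φ = ⟨n⟩(φ ∧ Q n k φ)`. -/
def Q (n : Ordinal) : ℕ → GLPFormula → GLPFormula
  | 0, _ => GLPFormula.top
  | k + 1, φ => GLPFormula.dia n ((GLPFormula.and φ (Q n k φ)))

/-- `diaPow n k φ` is `⟨n⟩^k φ`, `k` iterated applications of `⟨n⟩`. -/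
def diaPow (n : Ordinal) : ℕ → GLPFormula → GLPFormula
  | 0, φ => φ
  | k + 1, φ => GLPFormula.dia n (diaPow n k φ)

/-- The formula corresponding to a worm, given as its list of modality indices:
`[] ↦ ⊤` and `γ :: A ↦ ⟨γ⟩A`. -/
def wormFormula : List Ordinal → GLPFormula
  | [] => GLPFormula.top
  | γ :: A => GLPFormula.dia γ (wormFormula A)

/-- The generalized `Q`-formula: `Q(⊤,φ) = ⊤`, `Q(⟨γ⟩A, φ) = ⟨γ⟩(φ ∧ Q(A,φ))`. -/
def QWorm : List Ordinal → GLPFormula → GLPFormula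
  | [], _ => GLPFormula.top
  | γ :: A, φ => GLPFormula.dia γ (GLPFormula.and φ (QWorm A φ))

/-!
Induct on the worm. If `⊢ ⟨ζ⟩⊤ → B` and `B` has all its indices below `ζ`, then `⊢ B → [ζ]B`,
by monotonicity (by necessitation if `B = ⊤`), hence `⊢ ⟨ζ⟩⊤ → ⟨ζ⟩⊤ ∧ [ζ]B`. By normality
`⊢ ⟨ζ⟩⊤ → ⟨ζ⟩B`, and negative introspection lowers `⟨ζ⟩B` to `⟨γ⟩B` for each `γ < ζ`.
-/

theorem mods_wormFormula (A : List Ordinal) : (wormFormula A).mods = {γ | γ ∈ A} := by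
  induction A with
  | nil => simp [wormFormula, GLPFormula.mods]
  | cons γ B ih =>
    ext δ
    simp [wormFormula, GLPFormula.dia, GLPFormula.mods, ih]

namespace GLPProof

open GLPFormula

variable {S : Set Ordinal} {ξ ζ : Ordinal} {φ ψ χ : GLPFormula}

theorem mods_subset (h : GLPProof S φ) : φ.mods ⊆ S := by
  induction h with
  | taut hφ _ => exact hφ
  | mp _ _ ih _ => exact (Set.union_subset_iff.mp ih).2
  | nec hξ _ ih => exact Set.insert_subset hξ ih
  | _ => simp_all [mods, dia, Set.insert_subset_iff]

theorem proves_top : GLPProof S top :=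
  .taut (Set.empty_subset S) fun _ htop _ _ _ => htop

theorem imp_of_proves (hφ : φ.mods ⊆ S) (h : GLPProof S ψ) : GLPProof S (φ.imp ψ) := by
  have weakening : IsTautology (ψ.imp (φ.imp ψ)) := fun v _ _ _ himp => by
    simp only [himp]
    grind
  exact .mp (.taut (Set.union_subset h.mods_subset (Set.union_subset hφ h.mods_subset)) weakening) h

theorem imp_trans (h₁ : GLPProof S (φ.imp ψ)) (h₂ : GLPProof S (ψ.imp χ)) :
    GLPProof S (φ.imp χ) := by
  have syllogism : IsTautology ((φ.imp ψ).imp ((ψ.imp χ).imp (φ.imp χ))) := fun v _ _ _ himp => by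
    simp only [himp]
    grind
  have hφ : φ.mods ⊆ S := (Set.union_subset_iff.mp h₁.mods_subset).1
  have hχ : χ.mods ⊆ S := (Set.union_subset_iff.mp h₂.mods_subset).2
  have hmods : ((φ.imp ψ).imp ((ψ.imp χ).imp (φ.imp χ))).mods ⊆ S :=
    Set.union_subset h₁.mods_subset (Set.union_subset h₂.mods_subset (Set.union_subset hφ hχ))
  exact .mp (.mp (.taut hmods syllogism) h₁) h₂

theorem imp_contract (h : GLPProof S (φ.imp (φ.imp ψ))) : GLPProof S (φ.imp ψ) := by
  have contraction : IsTautology ((φ.imp (φ.imp ψ)).imp (φ.imp ψ)) := fun v _ _ _ himp => by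
    simp only [himp]
    grind
  have hmods : (φ.imp ψ).mods ⊆ S := (Set.union_subset_iff.mp h.mods_subset).2
  exact .mp (.taut (Set.union_subset h.mods_subset hmods) contraction) h

theorem contrapose (hφ : φ.mods ⊆ S) (hψ : ψ.mods ⊆ S) :
    GLPProof S ((φ.imp ψ).imp (ψ.neg.imp φ.neg)) :=
  .taut (Set.union_subset (Set.union_subset hφ hψ) (Set.union_subset hψ hφ))
    fun v _ hneg _ himp => by
      simp only [himp, hneg]
      grind

theorem imp_neg_imp (hφ : φ.mods ⊆ S) (hψ : ψ.mods ⊆ S) :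
    GLPProof S (ψ.imp (ψ.neg.imp φ)) :=
  .taut (Set.union_subset hψ (Set.union_subset hψ hφ)) fun v _ hneg _ himp => by
    simp only [himp, hneg]
    grind

theorem box_imp_box (hξ : ξ ∈ S) (h : GLPProof S (φ.imp ψ)) :
    GLPProof S ((box ξ φ).imp (box ξ ψ)) :=
  have hmods := Set.union_subset_iff.mp h.mods_subset
  .mp (.distr hξ hmods.1 hmods.2) (.nec hξ h)

theorem box_imp_dia_imp_dia (hξ : ξ ∈ S) (hφ : φ.mods ⊆ S) (hψ : ψ.mods ⊆ S) :
    GLPProof S ((box ξ ψ).imp ((dia ξ φ).imp (dia ξ ψ))) := by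
  have box_neg_imp_neg : GLPProof S ((box ξ ψ).imp (box ξ (ψ.neg.imp φ.neg))) :=
    box_imp_box hξ (imp_neg_imp (φ := φ.neg) hφ hψ)
  have distribute :
      GLPProof S ((box ξ (ψ.neg.imp φ.neg)).imp ((box ξ ψ.neg).imp (box ξ φ.neg))) :=
    .distr hξ hψ hφ
  have dualize :
      GLPProof S (((box ξ ψ.neg).imp (box ξ φ.neg)).imp ((dia ξ φ).imp (dia ξ ψ))) :=
    contrapose (Set.insert_subset hξ hψ) (Set.insert_subset hξ hφ)
  exact (box_neg_imp_neg.imp_trans distribute).imp_trans dualize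

theorem dia_imp_dia_of_dia_imp_box (h : GLPProof S ((dia ξ φ).imp (box ξ ψ))) :
    GLPProof S ((dia ξ φ).imp (dia ξ ψ)) := by
  obtain ⟨hdia, hbox⟩ := Set.union_subset_iff.mp h.mods_subset
  obtain ⟨hξ, hφ⟩ := Set.insert_subset_iff.mp hdia
  obtain ⟨-, hψ⟩ := Set.insert_subset_iff.mp hbox
  exact imp_contract (h.imp_trans (box_imp_dia_imp_dia hξ hφ hψ))

theorem wormFormula_imp_box {A : List Ordinal} (hζ : ζ ∈ S) (hA : ∀ γ ∈ A, γ ∈ S)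
    (hlt : ∀ γ ∈ A, γ < ζ) : GLPProof S ((wormFormula A).imp (box ζ (wormFormula A))) := by
  cases A with
  | nil => exact imp_of_proves proves_top.mods_subset (.nec hζ proves_top)
  | cons γ B =>
    obtain ⟨hγ, hB⟩ := List.forall_mem_cons.mp hA
    exact .mono (List.forall_mem_cons.mp hlt).1 hγ hζ ((mods_wormFormula B).trans_subset hB)

end GLPProof

theorem dia_top_implies_worm_general {S : Set Ordinal} {ζ : Ordinal} {A : List Ordinal}
    (hζ : ζ ∈ S) (hA : ∀ γ ∈ A, γ ∈ S) (hlt : ∀ γ ∈ A, γ < ζ) :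
    GLPProof S ((GLPFormula.dia ζ GLPFormula.top).imp (wormFormula A)) := by
  induction A with
  | nil => exact .imp_of_proves (Set.insert_subset hζ (Set.empty_subset S)) .proves_top
  | cons γ B ih =>
    obtain ⟨hγ, hB⟩ := List.forall_mem_cons.mp hA
    obtain ⟨hγζ, hBζ⟩ := List.forall_mem_cons.mp hlt
    have dia_imp_box : GLPProof S ((GLPFormula.dia ζ .top).imp (.box ζ (wormFormula B))) :=
      (ih hB hBζ).imp_trans (.wormFormula_imp_box hζ hB hBζ)
    have dia_imp_dia : GLPProof S ((GLPFormula.dia ζ .top).imp (.dia ζ (wormFormula B))) :=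
      dia_imp_box.dia_imp_dia_of_dia_imp_box
    exact dia_imp_dia.imp_trans (.negIntro hγζ hγ hζ ((mods_wormFormula B).trans_subset hB))

/-- If every modality index of the worm `A` is strictly below `ζ`,
then `⊢_GLP ⟨ζ⟩⊤ → A`. -/
theorem dia_top_implies_worm (ζ : Ordinal) (A : List Ordinal) (h : ∀ γ ∈ A, γ < ζ) :
    GLPProves ((GLPFormula.dia ζ GLPFormula.top).imp (wormFormula A)) :=
  dia_top_implies_worm_general (Set.mem_univ ζ) (fun γ _ => Set.mem_univ γ) h
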